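/- arXiv:2402.03554 — 2 statements merged into one kernel-verified Lean document; each statement's English description precedes it below -/
import Mathlib

section
/- Un(X→Z|Y) = Σ_{y : p_Y(y)>0} p_Y(y)·H(A_y) − H(X|Z), where H(A_y) is the Shannon entropy of the first marginal of do(p|c_y) and H(X|Z) is the conditional entropy computed from the (𝒳,𝒵)-marginal of p. -/
open Finset

/-- Shannon entropy of a distribution on a finite type (natural-log base). -/
noncomputable def ent {α : Type*} [Fintype α] (p : α → ℝ) : ℝ :=
  ∑ a, Real.negMulLog (p a)

/-- Mutual information between the two coordinates of a joint distribution. -/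
noncomputable def mutInfo {α β : Type*} [Fintype α] [Fintype β] (q : α × β → ℝ) : ℝ :=
  ent (fun a => ∑ b, q (a, b)) + ent (fun b => ∑ a, q (a, b)) - ent q

/-- Conditional entropy of the first coordinate given the second: H(A|B) = H(A,B) - H(B). -/
noncomputable def condEntFst {α β : Type*} [Fintype α] [Fintype β] (q : α × β → ℝ) : ℝ :=
  ent q - ent (fun b => ∑ a, q (a, b))

/-- Conditional entropy of the second coordinate given the first: H(B|A) = H(A,B) - H(A). -/
noncomputable def condEntSnd {α β : Type*} [Fintype α] [Fintype β] (q : α × β → ℝ) : ℝ :=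
  ent q - ent (fun a => ∑ b, q (a, b))

section PID

variable {X Y Z : Type*} [Fintype X] [Fintype Y] [Fintype Z]

/-- 𝒳-marginal of a joint distribution on 𝒳×𝒴×𝒵. -/
noncomputable def pX (p : X × Y × Z → ℝ) (x : X) : ℝ := ∑ y, ∑ z, p (x, y, z)

/-- 𝒴-marginal. -/
noncomputable def pY (p : X × Y × Z → ℝ) (y : Y) : ℝ := ∑ x, ∑ z, p (x, y, z)

/-- 𝒵-marginal. -/
noncomputable def pZ (p : X × Y × Z → ℝ) (z : Z) : ℝ := ∑ x, ∑ y, p (x, y, z)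

/-- The do-operation: q(x,y,z) = p(x,y,z)·c(z)/p_Z(z) if p_Z(z) > 0, else 0. -/
noncomputable def doOp (p : X × Y × Z → ℝ) (c : Z → ℝ) : X × Y × Z → ℝ :=
  fun t => if 0 < pZ p t.2.2 then p t * c t.2.2 / pZ p t.2.2 else 0

/-- (𝒳,𝒵)-marginal. -/
noncomputable def margXZ (p : X × Y × Z → ℝ) : X × Z → ℝ := fun t => ∑ y, p (t.1, y, t.2)

/-- (𝒴,𝒵)-marginal. -/
noncomputable def margYZ (p : X × Y × Z → ℝ) : Y × Z → ℝ := fun t => ∑ x, p (x, t.1, t.2)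

/-- (𝒳,𝒴)-marginal. -/
noncomputable def margXY (p : X × Y × Z → ℝ) : X × Y → ℝ := fun t => ∑ z, p (t.1, t.2, z)

/-- c_y(z) = Pr(Z = z | Y = y). -/
noncomputable def cy (p : X × Y × Z → ℝ) (y : Y) : Z → ℝ :=
  fun z => (∑ x, p (x, y, z)) / pY p y

/-- The distribution of (A_y, B_y, C_y) = do(p | c_y). -/
noncomputable def doy (p : X × Y × Z → ℝ) (y : Y) : X × Y × Z → ℝ := doOp p (cy p y)

/-- c^x(z) = Pr(Z = z | X = x). -/
noncomputable def cx (p : X × Y × Z → ℝ) (x : X) : Z → ℝ :=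
  fun z => (∑ y, p (x, y, z)) / pX p x

/-- The distribution of (A^x, B^x, C^x) = do(p | c^x). -/
noncomputable def dox (p : X × Y × Z → ℝ) (x : X) : X × Y × Z → ℝ := doOp p (cx p x)

/-- Unique information Un(X→Z|Y) = Σ_{y : p_Y(y)>0} p_Y(y)·I(A_y;C_y). -/
noncomputable def Un (p : X × Y × Z → ℝ) : ℝ :=
  ∑ y ∈ Finset.univ.filter (fun y => 0 < pY p y), pY p y * mutInfo (margXZ (doy p y))

/-- Unique information Un(Y→Z|X) = Σ_{x : p_X(x)>0} p_X(x)·I(B^x;C^x). -/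
noncomputable def UnYX (p : X × Y × Z → ℝ) : ℝ :=
  ∑ x ∈ Finset.univ.filter (fun x => 0 < pX p x), pX p x * mutInfo (margYZ (dox p x))

/-- Redundant information Red(X,Y→Z) = I(X;Z) − Un(X→Z|Y). -/
noncomputable def Red (p : X × Y × Z → ℝ) : ℝ := mutInfo (margXZ p) - Un p

/-- Conditional mutual information I(X;Z|Y) = H(X,Y) + H(Y,Z) − H(Y) − H(X,Y,Z). -/
noncomputable def condMI (p : X × Y × Z → ℝ) : ℝ :=
  ent (margXY p) + ent (margYZ p) - ent (pY p) - ent p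

/-- Synergistic information Syn(X,Y→Z) = I(X;Z|Y) − Un(X→Z|Y). -/
noncomputable def Syn (p : X × Y × Z → ℝ) : ℝ := condMI p - Un p

end PID

/-!
An intervention `do(p|c)` changes the law of `Z` but not the channel `X|Z`, so `H(A|C)` under
`do(p|c)` is the `c`-average of the entropies `H(X|Z=z)`, and in particular linear in `c`. Averaging
`I(A;C) = H(A) - H(A|C)` over any family of interventions whose mixture is `p_Z` therefore turns
the second term into `H(X|Z)`. The laws `c_y = p_{Z|Y=y}` with weights `p_Y(y)` form such a family,
by the law of total probability.
-/

theorem mutInfo_eq_ent_sub_condEntFst {α β : Type*} [Fintype α] [Fintype β] (q : α × β → ℝ) :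
    mutInfo q = ent (fun a => ∑ b, q (a, b)) - condEntFst q := by
  unfold mutInfo condEntFst
  ring

theorem condEntFst_mul_snd {α β : Type*} [Fintype α] [Fintype β] (q : α × β → ℝ) (k : β → ℝ) :
    condEntFst (fun t => q t * k t.2) =
      ∑ b, k b * (ent (fun a => q (a, b)) - Real.negMulLog (∑ a, q (a, b))) := by
  unfold condEntFst ent
  rw [Fintype.sum_prod_type_right, ← sum_sub_distrib]
  refine sum_congr rfl fun b _ => ?_
  -- The terms `q * negMulLog (k b)` produced by the product rule cancel between the two entropies.
  simp only [← sum_mul, Real.negMulLog_mul, sum_add_distrib, ← mul_sum]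
  ring

theorem condEntFst_mul_sum_snd {ι α β : Type*} [Fintype α] [Fintype β] (s : Finset ι)
    (w : ι → ℝ) (k : ι → β → ℝ) (q : α × β → ℝ) :
    condEntFst (fun t => q t * ∑ i ∈ s, w i * k i t.2) =
      ∑ i ∈ s, w i * condEntFst (fun t => q t * k i t.2) := by
  rw [condEntFst_mul_snd q fun b => ∑ i ∈ s, w i * k i b]
  simp_rw [fun i => condEntFst_mul_snd q (k i), mul_sum, sum_mul, mul_assoc]
  exact sum_comm

section Intervention

variable {X Y Z : Type*} {p : X × Y × Z → ℝ}

theorem sum_margXZ_snd [Fintype Y] [Fintype Z] (p : X × Y × Z → ℝ) (x : X) :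
    ∑ z, margXZ p (x, z) = pX p x :=
  sum_comm

theorem pY_nonneg [Fintype X] [Fintype Z] (hp : ∀ t, 0 ≤ p t) (y : Y) : 0 ≤ pY p y :=
  sum_nonneg fun _ _ => sum_nonneg fun _ _ => hp _

theorem le_pZ [Fintype X] [Fintype Y] (hp : ∀ t, 0 ≤ p t) (t : X × Y × Z) :
    p t ≤ pZ p t.2.2 :=
  calc
    p t ≤ ∑ y, p (t.1, y, t.2.2) :=
      single_le_sum (f := fun y => p (t.1, y, t.2.2)) (fun _ _ => hp _) (mem_univ t.2.1)
    _ ≤ pZ p t.2.2 :=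
      single_le_sum (f := fun x => ∑ y, p (x, y, t.2.2))
        (fun _ _ => sum_nonneg fun _ _ => hp _) (mem_univ t.1)

theorem sum_fst_le_pY [Fintype X] [Fintype Z] (hp : ∀ t, 0 ≤ p t) (y : Y) (z : Z) :
    ∑ x, p (x, y, z) ≤ pY p y :=
  sum_le_sum fun x _ => single_le_sum (f := fun z => p (x, y, z)) (fun _ _ => hp _) (mem_univ z)

theorem doOp_pZ [Fintype X] [Fintype Y] (hp : ∀ t, 0 ≤ p t) : doOp p (pZ p) = p := by
  funext t
  unfold doOp
  split_ifs with h
  · exact mul_div_cancel_right₀ _ h.ne'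
  · exact le_antisymm (hp t) ((le_pZ hp t).trans (not_lt.mp h))

theorem margXZ_doOp [Fintype X] [Fintype Y] (p : X × Y × Z → ℝ) (c : Z → ℝ) :
    margXZ (doOp p c) =
      fun t => margXZ p t * if 0 < pZ p t.2 then c t.2 / pZ p t.2 else 0 := by
  funext t
  unfold margXZ doOp
  split_ifs <;> simp [sum_mul, mul_div_assoc]

theorem condEntFst_margXZ_doOp_sum [Fintype X] [Fintype Y] [Fintype Z] {ι : Type*}
    (s : Finset ι) (w : ι → ℝ) (c : ι → Z → ℝ) (p : X × Y × Z → ℝ) :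
    condEntFst (margXZ (doOp p fun z => ∑ i ∈ s, w i * c i z)) =
      ∑ i ∈ s, w i * condEntFst (margXZ (doOp p (c i))) := by
  have hfactor : ∀ z, (if 0 < pZ p z then (∑ i ∈ s, w i * c i z) / pZ p z else 0) =
      ∑ i ∈ s, w i * if 0 < pZ p z then c i z / pZ p z else 0 := fun z => by
    split_ifs <;> simp [sum_div, mul_div_assoc]
  simp only [margXZ_doOp, hfactor]
  exact condEntFst_mul_sum_snd s w
    (fun i z => if 0 < pZ p z then c i z / pZ p z else 0) (margXZ p)

theorem pY_mul_cy [Fintype X] [Fintype Z] (hp : ∀ t, 0 ≤ p t) (y : Y) (z : Z) :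
    pY p y * cy p y z = ∑ x, p (x, y, z) :=
  mul_div_cancel_of_imp' fun h =>
    le_antisymm (h ▸ sum_fst_le_pY hp y z) (sum_nonneg fun _ _ => hp _)

theorem sum_pY_mul_cy [Fintype X] [Fintype Y] [Fintype Z] (hp : ∀ t, 0 ≤ p t) (z : Z) :
    ∑ y with 0 < pY p y, pY p y * cy p y z = pZ p z :=
  calc
    ∑ y with 0 < pY p y, pY p y * cy p y z = ∑ y, pY p y * cy p y z :=
      sum_filter_of_ne fun y _ h => (pY_nonneg hp y).lt_of_ne' (left_ne_zero_of_mul h)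
    _ = ∑ y, ∑ x, p (x, y, z) := sum_congr rfl fun y _ => pY_mul_cy hp y z
    _ = pZ p z := sum_comm

theorem stmt2_general [Fintype X] [Fintype Y] [Fintype Z] {ι : Type*} (hp : ∀ t, 0 ≤ p t)
    (s : Finset ι) (w : ι → ℝ) (c : ι → Z → ℝ) (hc : ∀ z, ∑ i ∈ s, w i * c i z = pZ p z) :
    ∑ i ∈ s, w i * mutInfo (margXZ (doOp p (c i))) =
      ∑ i ∈ s, w i * ent (pX (doOp p (c i))) - condEntFst (margXZ p) := by
  have hcond : ∑ i ∈ s, w i * condEntFst (margXZ (doOp p (c i))) = condEntFst (margXZ p) := by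
    rw [← condEntFst_margXZ_doOp_sum, funext hc, doOp_pZ hp]
  simp only [mutInfo_eq_ent_sub_condEntFst, sum_margXZ_snd, mul_sub, sum_sub_distrib, hcond]

end Intervention

theorem stmt2 {X Y Z : Type*} [Fintype X] [Fintype Y] [Fintype Z]
    [Nonempty X] [Nonempty Y] [Nonempty Z]
    (p : X × Y × Z → ℝ) (hp0 : ∀ t, 0 ≤ p t) (hp1 : ∑ t, p t = 1) :
    Un p =
      (∑ y ∈ Finset.univ.filter (fun y => 0 < pY p y), pY p y * ent (pX (doy p y)))
        - condEntFst (margXZ p) :=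
  stmt2_general hp0 _ (pY p) (cy p) (sum_pY_mul_cy hp0)
end

section
/- The do-operation factorizes over independent systems: if p, p' are joint distributions on 𝒳×𝒴×𝒵 and 𝒳'×𝒴'×𝒵', and c, c' are distributions on 𝒵, 𝒵' with c(z)=0 whenever p_Z(z)=0 and c'(z')=0 whenever p'_{Z'}(z')=0, then, identifying (𝒳×𝒳')×(𝒴×𝒴')×(𝒵×𝒵') with (𝒳×𝒴×𝒵)×(𝒳'×𝒴'×𝒵'), do(p⊗p' | c⊗c') = do(p|c) ⊗ do(p'|c'), where (μ⊗ν)(a,b) = μ(a)·ν(b) denotes the product distribution. -/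
open Finset

section Tensor

variable {X Y Z X' Y' Z' : Type*}

/-- The product distribution `p ⊗ p'` of two independent triples. It is written on the
regrouped alphabet `(𝒳×𝒳')×(𝒴×𝒴')×(𝒵×𝒵')`, so that it is again a distribution on triples. -/
noncomputable def tensor (p : X × Y × Z → ℝ) (p' : X' × Y' × Z' → ℝ) :
    (X × X') × (Y × Y') × (Z × Z') → ℝ :=
  fun s => p (s.1.1, s.2.1.1, s.2.2.1) * p' (s.1.2, s.2.1.2, s.2.2.2)

variable [Fintype X] [Fintype Y] [Fintype X'] [Fintype Y']

theorem pZ_nonneg {p : X × Y × Z → ℝ} (hp : 0 ≤ p) : 0 ≤ pZ p :=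
  fun _ => sum_nonneg fun _ _ => sum_nonneg fun _ _ => hp _

theorem pZ_tensor (p : X × Y × Z → ℝ) (p' : X' × Y' × Z' → ℝ) (z : Z × Z') :
    pZ (tensor p p') z = pZ p z.1 * pZ p' z.2 := by
  simp only [pZ, tensor, Fintype.sum_prod_type, sum_mul_sum]

theorem doOp_apply_of_pZ_nonneg {p : X × Y × Z → ℝ} (hp : 0 ≤ pZ p) (c : Z → ℝ)
    (t : X × Y × Z) : doOp p c t = p t * c t.2.2 / pZ p t.2.2 := by
  rcases (hp t.2.2).eq_or_lt' with hz | hz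
  · -- `x / 0 = 0` agrees with the value prescribed outside the support of `pZ p`.
    simp [doOp, hz]
  · exact if_pos hz

theorem stmt15_general {p : X × Y × Z → ℝ} {p' : X' × Y' × Z' → ℝ}
    (hp : 0 ≤ pZ p) (hp' : 0 ≤ pZ p') (c : Z → ℝ) (c' : Z' → ℝ) :
    doOp (tensor p p') (fun z => c z.1 * c' z.2) = tensor (doOp p c) (doOp p' c') := by
  have hpp' : 0 ≤ pZ (tensor p p') := fun z =>
    (mul_nonneg (hp z.1) (hp' z.2)).trans_eq (pZ_tensor p p' z).symm
  ext t
  simp only [tensor, doOp_apply_of_pZ_nonneg hp, doOp_apply_of_pZ_nonneg hp',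
    doOp_apply_of_pZ_nonneg hpp', pZ_tensor]
  rw [mul_mul_mul_comm, mul_div_mul_comm]

end Tensor

theorem stmt15 {X Y Z X' Y' Z' : Type*}
    [Fintype X] [Fintype Y] [Fintype Z] [Fintype X'] [Fintype Y'] [Fintype Z']
    [Nonempty X] [Nonempty Y] [Nonempty Z] [Nonempty X'] [Nonempty Y'] [Nonempty Z']
    (p : X × Y × Z → ℝ) (hp0 : ∀ t, 0 ≤ p t) (hp1 : ∑ t, p t = 1)
    (p' : X' × Y' × Z' → ℝ) (hp'0 : ∀ t, 0 ≤ p' t) (hp'1 : ∑ t, p' t = 1)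
    (c : Z → ℝ) (hc0 : ∀ z, 0 ≤ c z) (hc1 : ∑ z, c z = 1)
    (hcz : ∀ z, pZ p z = 0 → c z = 0)
    (c' : Z' → ℝ) (hc'0 : ∀ z, 0 ≤ c' z) (hc'1 : ∑ z, c' z = 1)
    (hc'z : ∀ z, pZ p' z = 0 → c' z = 0) :
    ∀ t : (X × X') × (Y × Y') × (Z × Z'),
      doOp (fun s : (X × X') × (Y × Y') × (Z × Z') =>
      p (s.1.1, s.2.1.1, s.2.2.1) * p' (s.1.2, s.2.1.2, s.2.2.2))
        (fun z : Z × Z' => c z.1 * c' z.2) t =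
      doOp p c (t.1.1, t.2.1.1, t.2.2.1) * doOp p' c' (t.1.2, t.2.1.2, t.2.2.2) :=
  congrFun (stmt15_general (pZ_nonneg hp0) (pZ_nonneg hp'0) c c')
end
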